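/- Min-max interchange for the penalised primal problem: Let μ₁,…,μ_n be Borel probability measures on ℝ₊ with finite first moments, 𝔓 ⊆ Ω closed with M⁻_{μ,𝔓} ≠ ∅, and G : ℝ₊^n → [−∞, ∞) upper semi-continuous with G(s₁,…,s_n) ≤ K(1 + s₁ + … + s_n) for some constant K and sup_{ℙ ∈ M⁻_{μ,𝔓}} E_ℙ[G] > −∞. With λ_𝔓(s₁,…,s_n) := (1 + s₁ + … + s_n) · 1{(s₁,…,s_n) ∉ 𝔓} and G^{(N)} := G − N λ_𝔓, one has inf_{N ≥ 1} sup_{ℙ ∈ M⁻_μ} E_ℙ[G^{(N)}] = sup_{ℙ ∈ M⁻_μ} inf_{N ≥ 1} E_ℙ[G^{(N)}] = sup_{ℙ ∈ M⁻_{μ,𝔓}} E_ℙ[G]. -/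

import Mathlib

open MeasureTheory Set Filter Topology
open scoped ENNReal NNReal Classical

noncomputable section

namespace RobustFin

/-- Canonical path space: the values `S₀, S₁, …, S_n` of the asset. -/
abbrev Path (n : ℕ) := Fin (n + 1) → ℝ

/-- Paths starting at `s₀` with nonnegative coordinates: the canonical space `Ω`. -/
def Omega (n : ℕ) (s₀ : ℝ) : Set (Path n) := {ω | ω 0 = s₀ ∧ ∀ i, 0 ≤ ω i}

/-- The first `j` coordinates `S₁, …, S_j` of a path. -/
def restr {n : ℕ} (j : Fin n) (ω : Path n) : Fin j → ℝ :=
  fun i => ω ⟨(i : ℕ) + 1, by have h1 := i.isLt; have h2 := j.isLt; omega⟩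

/-- The coordinates `S₁, …, S_n` of a path. -/
def tailCoords {n : ℕ} (ω : Path n) : Fin n → ℝ := fun i => ω i.succ

/-- A dynamic trading strategy: bounded measurable positions `Δ_j(S₁,…,S_j)`. -/
structure Dyn (n : ℕ) where
  pos : (j : Fin n) → (Fin j → ℝ) → ℝ
  meas : ∀ j, Measurable (pos j)
  bdd : ∀ j, ∃ C, ∀ x, |pos j x| ≤ C

/-- No short selling: all dynamic positions are nonnegative. -/
def Dyn.Nonneg {n : ℕ} (D : Dyn n) : Prop := ∀ j x, 0 ≤ D.pos j x

/-- Gains from dynamic trading: `Σ_j Δ_j(S₁,…,S_j)(S_{j+1} − S_j)`. -/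
def Dyn.gains {n : ℕ} (D : Dyn n) (ω : Path n) : ℝ :=
  ∑ j : Fin n, D.pos j (restr j ω) * (ω j.succ - ω j.castSucc)

/-- A static option portfolio: a constant (cash) position plus a finite linear
combination of options with maturity indices `idx` and nonnegative strikes. -/
structure Static (n : ℕ) where
  const : ℝ
  m : ℕ
  coeff : Fin m → ℝ
  idx : Fin m → Fin n
  strike : Fin m → ℝ
  strike_nonneg : ∀ k, 0 ≤ strike k

/-- Payoff of the portfolio when the options are call options. -/
def Static.callPayoff {n : ℕ} (X : Static n) (ω : Path n) : ℝ :=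
  X.const + ∑ k, X.coeff k * max (ω (X.idx k).succ - X.strike k) 0

/-- Payoff of the portfolio when the options are put options. -/
def Static.putPayoff {n : ℕ} (X : Static n) (ω : Path n) : ℝ :=
  X.const + ∑ k, X.coeff k * max (X.strike k - ω (X.idx k).succ) 0

/-- Price of a static portfolio, given the unit option prices `c i K`;
this is the (unique) linear pricing functional determined by the prices. -/
def Static.price {n : ℕ} (X : Static n) (c : Fin n → ℝ → ℝ) : ℝ :=
  X.const + ∑ k, X.coeff k * c (X.idx k) (X.strike k)

/-- Expectation of a real payoff, valued in `EReal`, with the convention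
`∞ − ∞ = −∞` (in `EReal`, `⊤ - ⊤ = ⊥`). -/
def eexp {n : ℕ} (P : Measure (Path n)) (f : Path n → ℝ) : EReal :=
  ((∫⁻ ω, ENNReal.ofReal (f ω) ∂P : ℝ≥0∞) : EReal) -
    ((∫⁻ ω, ENNReal.ofReal (-(f ω)) ∂P : ℝ≥0∞) : EReal)

/-- The positive part of an extended real number, in `ℝ≥0∞`. -/
def posE (x : EReal) : ℝ≥0∞ := if x = ⊤ then ⊤ else ENNReal.ofReal x.toReal

/-- Expectation of an `EReal`-valued payoff, with the convention `∞ − ∞ = −∞`. -/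
def eexpE {n : ℕ} (P : Measure (Path n)) (f : Path n → EReal) : EReal :=
  ((∫⁻ ω, posE (f ω) ∂P : ℝ≥0∞) : EReal) - ((∫⁻ ω, posE (-(f ω)) ∂P : ℝ≥0∞) : EReal)

/-- A market calibrated model for the market with static payoffs `pay` (calls or puts),
prices `c` and prediction set `P`. -/
def Calibrated {n : ℕ} (pay : Static n → Path n → ℝ) (c : Fin n → ℝ → ℝ)
    (P : Set (Path n)) (Q : Measure (Path n)) : Prop :=
  IsProbabilityMeasure Q ∧ Q P = 1 ∧
    ∀ (X : Static n) (D : Dyn n), D.Nonneg →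
      eexp Q (fun ω => pay X ω + D.gains ω) ≤ (X.price c : EReal)

/-- A weak free lunch with vanishing risk. -/
def WFLVR {n : ℕ} (pay : Static n → Path n → ℝ) (c : Fin n → ℝ → ℝ)
    (P : Set (Path n)) : Prop :=
  ∃ (Xs : ℕ → Static n) (Ds : ℕ → Dyn n) (X : Static n) (D : Dyn n) (L : ℝ),
    (∀ k, (Ds k).Nonneg) ∧ D.Nonneg ∧
    (∀ ω ∈ P, Tendsto (fun k => pay (Xs k) ω + (Ds k).gains ω) atTop (nhds 0)) ∧
    (∀ k, ∀ ω ∈ P, pay X ω + D.gains ω ≤ pay (Xs k) ω + (Ds k).gains ω) ∧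
    Tendsto (fun k => (Xs k).price c) atTop (nhds L) ∧ L < 0

/-- A robust uniformly strong arbitrage. -/
def RobustArbitrage {n : ℕ} (pay : Static n → Path n → ℝ) (c : Fin n → ℝ → ℝ)
    (P : Set (Path n)) : Prop :=
  ∃ (X : Static n) (D : Dyn n), D.Nonneg ∧ X.price c < 0 ∧
    ∀ ω ∈ P, 0 ≤ pay X ω + D.gains ω

/-- The superhedging price of `G` over semi-static strategies (no short selling). -/
def V {n : ℕ} (pay : Static n → Path n → ℝ) (c : Fin n → ℝ → ℝ)
    (P : Set (Path n)) (G : Path n → EReal) : EReal :=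
  sInf {q : EReal | ∃ (X : Static n) (D : Dyn n), D.Nonneg ∧ q = (X.price c : EReal) ∧
    ∀ ω ∈ P, G ω ≤ ((pay X ω + D.gains ω : ℝ) : EReal)}

/-- The superhedging price of `G` when the dynamic positions may take both signs. -/
def Vsigned {n : ℕ} (pay : Static n → Path n → ℝ) (c : Fin n → ℝ → ℝ)
    (P : Set (Path n)) (G : Path n → EReal) : EReal :=
  sInf {q : EReal | ∃ (X : Static n) (D : Dyn n), q = (X.price c : EReal) ∧
    ∀ ω ∈ P, G ω ≤ ((pay X ω + D.gains ω : ℝ) : EReal)}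

/-- `Π_μ`: probability measures on the path space with marginals `δ_{s₀}, μ₁, …, μ_n`. -/
def PiMu {n : ℕ} (s₀ : ℝ) (μ : Fin n → Measure ℝ) : Set (Measure (Path n)) :=
  {π | IsProbabilityMeasure π ∧ π (Omega n s₀) = 1 ∧
       ∀ i : Fin n, π.map (fun ω => ω i.succ) = μ i}

/-- The coordinate process is a supermartingale in its natural filtration:
for every Borel `A ⊆ ℝ₊^j`, `∫ 1_A(S₁,…,S_j)(S_{j+1} − S_j) dπ ≤ 0`. -/
def IsSupermartingaleLaw {n : ℕ} (π : Measure (Path n)) : Prop :=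
  ∀ (j : Fin n) (A : Set (Fin j → ℝ)), MeasurableSet A →
    ∫ ω, Set.indicator A (fun _ => (1 : ℝ)) (restr j ω) * (ω j.succ - ω j.castSucc) ∂π ≤ 0

/-- `M⁻_μ`: calibrated supermartingale measures. -/
def MSet {n : ℕ} (s₀ : ℝ) (μ : Fin n → Measure ℝ) : Set (Measure (Path n)) :=
  {π ∈ PiMu s₀ μ | IsSupermartingaleLaw π}

/-- `M⁻_{μ,𝔓}`: calibrated supermartingale measures giving full mass to `P`. -/
def MSetP {n : ℕ} (s₀ : ℝ) (μ : Fin n → Measure ℝ) (P : Set (Path n)) :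
    Set (Measure (Path n)) :=
  {π ∈ MSet s₀ μ | π P = 1}

/-- Assumption A on the marginals. -/
def AssumptionA {n : ℕ} (s₀ : ℝ) (μ : Fin n → Measure ℝ) : Prop :=
  (∀ i, ∫ x, x ∂(μ i) ≤ s₀) ∧
  (∀ i j : Fin n, i ≤ j → ∫ x, x ∂(μ j) ≤ ∫ x, x ∂(μ i)) ∧
  (∀ φ : ℝ → ℝ, ConcaveOn ℝ Set.univ φ → Monotone φ → (∀ x, 0 ≤ φ x) →
    ∀ i j : Fin n, i ≤ j → ∫ x, φ x ∂(μ j) ≤ ∫ x, φ x ∂(μ i))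

/-- Condition C (i): each `c_i` is nonnegative, convex and nonincreasing on `ℝ₊`. -/
def CondC1 {n : ℕ} (c : Fin n → ℝ → ℝ) : Prop :=
  ∀ i, (∀ x, 0 ≤ x → 0 ≤ c i x) ∧ ConvexOn ℝ (Set.Ici 0) (c i) ∧ AntitoneOn (c i) (Set.Ici 0)

/-- Condition C (ii): `s₀ ≥ c₁(0) ≥ … ≥ c_n(0) ≥ 0` and `c_i'(0+) ≥ −1`
(the latter expressed, for convex `c_i`, through the slopes at `0`). -/
def CondC2 {n : ℕ} (s₀ : ℝ) (c : Fin n → ℝ → ℝ) : Prop :=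
  (∀ i, c i 0 ≤ s₀) ∧ (∀ i j : Fin n, i ≤ j → c j 0 ≤ c i 0) ∧ (∀ i, 0 ≤ c i 0) ∧
    (∀ i, ∀ K : ℝ, 0 < K → c i 0 - K ≤ c i K)

/-- Condition C (iii): `c_i(K) → 0` as `K → ∞`. -/
def CondC3 {n : ℕ} (c : Fin n → ℝ → ℝ) : Prop :=
  ∀ i, Tendsto (c i) atTop (nhds 0)

/-- Condition C (iv): for every `x ≥ 0`, `c_i(0) − c_i(x)` is nonincreasing in `i`. -/
def CondC4 {n : ℕ} (c : Fin n → ℝ → ℝ) : Prop :=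
  ∀ x : ℝ, 0 ≤ x → ∀ i j : Fin n, i ≤ j → c j 0 - c j x ≤ c i 0 - c i x

/-- Condition C. -/
def CondC {n : ℕ} (s₀ : ℝ) (c : Fin n → ℝ → ℝ) : Prop :=
  CondC1 c ∧ CondC2 s₀ c ∧ CondC3 c ∧ CondC4 c

/-- Condition P (i). -/
def CondP1 {n : ℕ} (p : Fin n → ℝ → ℝ) : Prop :=
  ∀ i, (∀ x, 0 ≤ x → 0 ≤ p i x) ∧ ConvexOn ℝ (Set.Ici 0) (p i) ∧ MonotoneOn (p i) (Set.Ici 0)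

/-- Condition P (ii): `s₀ ≥ lim (x − p₁(x)) ≥ … ≥ 0` and `0 ≤ p_i'(0+) ≤ 1`. -/
def CondP2 {n : ℕ} (s₀ : ℝ) (p : Fin n → ℝ → ℝ) : Prop :=
  (∃ L : Fin n → ℝ,
    (∀ i, Tendsto (fun x => x - p i x) atTop (nhds (L i))) ∧
    (∀ i, L i ≤ s₀) ∧ (∀ i j : Fin n, i ≤ j → L j ≤ L i) ∧ (∀ i, 0 ≤ L i)) ∧
  (∃ d : Fin n → ℝ,
    (∀ i, Tendsto (fun K => (p i K - p i 0) / K) (nhdsWithin 0 (Set.Ioi 0)) (nhds (d i))) ∧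
    (∀ i, 0 ≤ d i ∧ d i ≤ 1))

/-- Condition P (iii): `p_i(K) → 0` as `K → 0` (within `ℝ₊`). -/
def CondP3 {n : ℕ} (p : Fin n → ℝ → ℝ) : Prop :=
  ∀ i, Tendsto (p i) (nhdsWithin 0 (Set.Ici 0)) (nhds 0)

/-- Condition P (iv): `p_i(x)` is nondecreasing in `i`. -/
def CondP4 {n : ℕ} (p : Fin n → ℝ → ℝ) : Prop :=
  ∀ x : ℝ, 0 ≤ x → ∀ i j : Fin n, i ≤ j → p i x ≤ p j x

/-- Condition P. -/
def CondP {n : ℕ} (s₀ : ℝ) (p : Fin n → ℝ → ℝ) : Prop :=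
  CondP1 p ∧ CondP2 s₀ p ∧ CondP3 p ∧ CondP4 p

/-- The measures `μ_i` defined from the put prices by `μ_i([0,K]) = p_i'(K)`;
equivalently, `p_i(K) = ∫ (K − x)⁺ μ_i(dx)`. -/
def PutPricesFrom {n : ℕ} (p : Fin n → ℝ → ℝ) (μ : Fin n → Measure ℝ) : Prop :=
  (∀ i, IsProbabilityMeasure (μ i)) ∧ (∀ i, μ i (Set.Iio 0) = 0) ∧
  (∀ i, Integrable (fun x => x) (μ i)) ∧
  (∀ i, ∀ K : ℝ, 0 ≤ K → p i K = ∫ x, max (K - x) 0 ∂(μ i))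

/-- The path `(s₀, s₁, …, s_i, x, s_{i+2}, …, s_n)`. -/
def mkPath {n : ℕ} (s₀ : ℝ) (i : Fin n) (s : Fin i → ℝ) (x : ℝ)
    (t : Fin (n - ((i : ℕ) + 1)) → ℝ) : Path n := fun j =>
  if h0 : (j : ℕ) = 0 then s₀
  else if h1 : (j : ℕ) ≤ (i : ℕ) then
    s ⟨(j : ℕ) - 1, by have := j.isLt; have := i.isLt; omega⟩
  else if h2 : (j : ℕ) = (i : ℕ) + 1 then x
  else t ⟨(j : ℕ) - (i : ℕ) - 2, by have := j.isLt; have := i.isLt; omega⟩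

/-- The family `β_i : ℝ₊^i → ℝ` defined recursively by `β_n = 0` and
`β_i(s₁,…,s_i) = (sup_{s_{i+2},…,s_n} limsup_{x→∞} ((β_{i+1}(s₁,…,s_i,x)
 + G(s₁,…,s_i,x,s_{i+2},…,s_n)/x)·1_𝔓)) ∨ 0`. -/
def IsBetaFamily {n : ℕ} (s₀ : ℝ) (P : Set (Path n)) (G : (Fin n → ℝ) → EReal)
    (β : (i : Fin (n + 1)) → (Fin i → ℝ) → ℝ) : Prop :=
  (∀ s, β (Fin.last n) s = 0) ∧
  ∀ (i : Fin n) (s : Fin i → ℝ), (∀ k, 0 ≤ s k) →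
    (β ⟨(i : ℕ), by have := i.isLt; omega⟩ s : EReal) =
      max 0 (⨆ (t : Fin (n - ((i : ℕ) + 1)) → ℝ) (_ : ∀ k, 0 ≤ t k),
        Filter.limsup (fun x : ℝ =>
          if mkPath s₀ i s x t ∈ P then
            ((β ⟨(i : ℕ) + 1, by have := i.isLt; omega⟩ (Fin.snoc s x) : ℝ) : EReal)
              + G (tailCoords (mkPath s₀ i s x t)) * ((x⁻¹ : ℝ) : EReal)
          else 0) Filter.atTop)

/-- Gains of the dynamic strategy `(β_i)`: `β₀(S₁ − s₀) + Σ_i β_i(S₁,…,S_i)(S_{i+1} − S_i)`. -/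
def gainsOf {n : ℕ} (β : (i : Fin (n + 1)) → (Fin i → ℝ) → ℝ) (ω : Path n) : ℝ :=
  ∑ j : Fin n, β ⟨(j : ℕ), by have := j.isLt; omega⟩ (restr j ω) * (ω j.succ - ω j.castSucc)

/-- The penalty function `λ_𝔓(s₁,…,s_n) = (1 + s₁ + … + s_n)·1{(s₁,…,s_n) ∉ 𝔓}`. -/
def lambdaP {n : ℕ} (P : Set (Path n)) (ω : Path n) : ℝ :=
  if ω ∈ P then 0 else 1 + ∑ i : Fin n, ω i.succ

/-- `min(s₀, s₁, …, s_m)`. -/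
def pmin {m : ℕ} (s₀ : ℝ) (s : Fin m → ℝ) : ℝ :=
  Finset.univ.inf' Finset.univ_nonempty
    (fun j : Fin (m + 1) =>
      if h : (j : ℕ) = 0 then s₀ else s ⟨(j : ℕ) - 1, by have := j.isLt; omega⟩)

/-- `max(s₀, s₁, …, s_m)`. -/
def pmax {m : ℕ} (s₀ : ℝ) (s : Fin m → ℝ) : ℝ :=
  Finset.univ.sup' Finset.univ_nonempty
    (fun j : Fin (m + 1) =>
      if h : (j : ℕ) = 0 then s₀ else s ⟨(j : ℕ) - 1, by have := j.isLt; omega⟩)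

/-!
By Prokhorov's theorem `M⁻_μ` is weakly compact: prescribed marginals force tightness, and the
supermartingale property is closed because `∫ S_i φ(S₁, …, S_j) dQ` depends continuously on `Q`
when the law of `S_i` is fixed. The last point holds since `S_i φ` is dominated by a multiple of
`S_i`, whose integral is the same finite number for all `Q`; applying Fatou's lemma to the gap gives
upper semicontinuity. The same domination, by `K (1 + S₁ + … + S_n)`, makes `Q ↦ E_Q[G^{(N)}]` upper
semicontinuous. These functionals decrease in `N`, so on a compact set infimum and supremum
interchange by Dini's covering argument. Finally, `inf_N E_Q[G^{(N)}]` is `E_Q[G]` if `Q(𝔓) = 1`,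
and `-∞` otherwise, because the penalty charges mass at least `Q(𝔓ᶜ)` at rate `N`.
-/

section Minimax

theorem iInf_iSup_eq_iSup_iInf_of_antitone {X ι α : Type*} [TopologicalSpace X] [Preorder ι]
    [IsDirectedOrder ι] [Nonempty ι] [CompleteLinearOrder α] [DenselyOrdered α] {K : Set X}
    (hK : IsCompact K) {f : ι → X → α} (hf : ∀ i, UpperSemicontinuousOn (f i) K)
    (hanti : ∀ x ∈ K, Antitone (f · x)) :
    ⨅ i, ⨆ x ∈ K, f i x = ⨆ x ∈ K, ⨅ i, f i x := by
  refine le_antisymm (le_of_forall_gt_imp_ge_of_dense fun c hc => ?_)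
    (iSup₂_le fun x hx => le_iInf fun i => (iInf_le _ i).trans <|
      le_iSup₂ (f := fun x _ => f i x) x hx)
  suffices h : ∃ i, ∀ x ∈ K, f i x ≤ c by
    obtain ⟨i, hi⟩ := h
    exact (iInf_le _ i).trans (iSup₂_le hi)
  suffices h : ∃ i, ∀ x ∈ K ∩ K, f i x ≤ c by simpa only [inter_self] using h
  refine hK.induction_on (p := fun s => ∃ i, ∀ x ∈ K ∩ s, f i x ≤ c) ?_ ?_ ?_ ?_
  · simp
  · rintro s t hst ⟨i, hi⟩
    exact ⟨i, fun x hx => hi x ⟨hx.1, hst hx.2⟩⟩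
  · rintro s t ⟨i, hi⟩ ⟨j, hj⟩
    obtain ⟨k, hik, hjk⟩ := exists_ge_ge i j
    refine ⟨k, ?_⟩
    rintro x ⟨hxK, hxs | hxt⟩
    · exact (hanti x hxK hik).trans (hi x ⟨hxK, hxs⟩)
    · exact (hanti x hxK hjk).trans (hj x ⟨hxK, hxt⟩)
  · intro x hx
    have hxc : ⨅ i, f i x < c := (le_iSup₂ (f := fun x _ => ⨅ i, f i x) x hx).trans_lt hc
    obtain ⟨i, hi⟩ := iInf_lt_iff.1 hxc
    refine ⟨{y | f i y < c}, hf i x hx c hi, i, fun y hy => hy.2.le⟩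

end Minimax

section Integral

variable {E : Type*} [TopologicalSpace E]

lemma upperSemicontinuousOn_congr {α : Type*} [Preorder α] {f g : E → α} {s : Set E}
    (hfg : EqOn f g s) (hf : UpperSemicontinuousOn f s) : UpperSemicontinuousOn g s := by
  intro x hx y hy
  filter_upwards [hf x hx y ((hfg hx).trans_lt hy), self_mem_nhdsWithin] with z hz hzs
  exact (hfg hzs).symm.trans_lt hz

lemma lowerSemicontinuous_tsub {f g : E → ℝ≥0∞} (hg : LowerSemicontinuous g)
    (hf : UpperSemicontinuous f) : LowerSemicontinuous fun x => g x - f x := by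
  intro x y hy
  obtain ⟨a, hfa, hay⟩ := exists_between (lt_tsub_comm.1 hy)
  filter_upwards [hf x a hfa, hg x (a + y) (lt_tsub_iff_right.1 hay)] with z hfz hgz
  exact lt_tsub_comm.1 (hfz.trans (lt_tsub_iff_right.2 hgz))

variable [MeasurableSpace E] [BorelSpace E]
  [TopologicalSpace.PseudoMetrizableSpace E] [TopologicalSpace.SeparableSpace E]

lemma lowerSemicontinuous_lintegral_ofReal {h : E → ℝ} (hl : LowerSemicontinuous h)
    (h0 : ∀ x, 0 ≤ h x) :
    LowerSemicontinuous fun Q : ProbabilityMeasure E => ∫⁻ x, ENNReal.ofReal (h x) ∂Q := by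
  refine lowerSemicontinuous_iff_le_liminf.2 fun Q => ?_
  have layer_cake (R : ProbabilityMeasure E) :
      ∫⁻ x, ENNReal.ofReal (h x) ∂(R : Measure E) =
        ∫⁻ t in Ioi (0 : ℝ), (R : Measure E) {x | t < h x} :=
    lintegral_eq_lintegral_meas_lt _ (.of_forall h0) hl.measurable.aemeasurable
  simp only [layer_cake]
  calc ∫⁻ t in Ioi (0 : ℝ), (Q : Measure E) {x | t < h x}
      ≤ ∫⁻ t in Ioi (0 : ℝ), (𝓝 Q).liminf fun R : ProbabilityMeasure E =>
          (R : Measure E) {x | t < h x} :=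
        lintegral_mono fun t =>
          ProbabilityMeasure.le_liminf_measure_open_of_tendsto tendsto_id (hl.isOpen_preimage t)
    _ ≤ (𝓝 Q).liminf fun R : ProbabilityMeasure E =>
          ∫⁻ t in Ioi (0 : ℝ), (R : Measure E) {x | t < h x} :=
        lintegral_liminf_le fun R =>
          Antitone.measurable fun s t hst => measure_mono fun x hx => lt_of_le_of_lt hst hx

theorem lowerSemicontinuous_lintegral {h : E → ℝ≥0∞} (hl : LowerSemicontinuous h) :
    LowerSemicontinuous fun Q : ProbabilityMeasure E => ∫⁻ x, h x ∂Q := by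
  have htrunc (k : ℕ) : LowerSemicontinuous fun x => ENNReal.truncateToReal k (h x) :=
    (ENNReal.continuous_truncateToReal (ENNReal.natCast_ne_top k)).comp_lowerSemicontinuous hl
      (ENNReal.monotone_truncateToReal (ENNReal.natCast_ne_top k))
  have hmin (k : ℕ) (x : E) :
      ENNReal.ofReal (ENNReal.truncateToReal k (h x)) = min (k : ℝ≥0∞) (h x) :=
    ENNReal.ofReal_toReal (ne_top_of_le_ne_top (ENNReal.natCast_ne_top k) (min_le_left _ _))
  have hsup (Q : ProbabilityMeasure E) :
      ∫⁻ x, h x ∂Q = ⨆ k : ℕ, ∫⁻ x, ENNReal.ofReal (ENNReal.truncateToReal k (h x)) ∂Q := by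
    simp only [hmin]
    rw [← lintegral_iSup (fun k => measurable_const.min hl.measurable)
      fun i j hij x => min_le_min_right _ (by exact_mod_cast hij)]
    simp only [← iSup_inf_eq, ENNReal.iSup_natCast, top_inf_eq]
  simp only [hsup]
  exact lowerSemicontinuous_iSup fun k =>
    lowerSemicontinuous_lintegral_ofReal (htrunc k) fun x => ENNReal.truncateToReal_nonneg

theorem upperSemicontinuousOn_lintegral_of_le {f g : E → ℝ≥0∞} (hf : UpperSemicontinuous f)
    (hg : Continuous g) (hfg : f ≤ g) {M : Set (ProbabilityMeasure E)} {c : ℝ≥0∞} (hc : c ≠ ⊤)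
    (hM : ∀ Q ∈ M, ∫⁻ x, g x ∂Q = c) :
    UpperSemicontinuousOn (fun Q : ProbabilityMeasure E => ∫⁻ x, f x ∂Q) M := by
  have hgap : LowerSemicontinuous fun Q : ProbabilityMeasure E => ∫⁻ x, (g x - f x) ∂Q :=
    lowerSemicontinuous_lintegral (lowerSemicontinuous_tsub hg.lowerSemicontinuous hf)
  have heq : EqOn (fun Q : ProbabilityMeasure E => c - ∫⁻ x, (g x - f x) ∂Q)
      (fun Q : ProbabilityMeasure E => ∫⁻ x, f x ∂Q) M := by
    intro Q hQ
    have hsum : ∫⁻ x, f x ∂Q + ∫⁻ x, (g x - f x) ∂Q = c := by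
      rw [← lintegral_add_left hf.measurable, ← hM Q hQ]
      exact lintegral_congr fun x => add_tsub_cancel_of_le (hfg x)
    have hne : ∫⁻ x, (g x - f x) ∂Q ≠ ⊤ := ne_top_of_le_ne_top hc (hsum ▸ le_add_self)
    exact (ENNReal.eq_sub_of_add_eq hne hsum).symm
  refine upperSemicontinuousOn_congr heq ?_
  exact ((ENNReal.continuous_sub_left hc).comp_lowerSemicontinuous_antitone hgap
    antitone_const_tsub).upperSemicontinuousOn M

theorem continuousOn_lintegral_of_le {f g : E → ℝ≥0∞} (hf : Continuous f)
    (hg : Continuous g) (hfg : f ≤ g) {M : Set (ProbabilityMeasure E)} {c : ℝ≥0∞} (hc : c ≠ ⊤)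
    (hM : ∀ Q ∈ M, ∫⁻ x, g x ∂Q = c) :
    ContinuousOn (fun Q : ProbabilityMeasure E => ∫⁻ x, f x ∂Q) M :=
  continuousOn_iff_lower_upperSemicontinuousOn.2
    ⟨(lowerSemicontinuous_lintegral hf.lowerSemicontinuous).lowerSemicontinuousOn M,
      upperSemicontinuousOn_lintegral_of_le hf.upperSemicontinuous hg hfg hc hM⟩

lemma isClosed_setOf_measure_eq_one {F : Set E} (hF : IsClosed F) :
    IsClosed {Q : ProbabilityMeasure E | (Q : Measure E) F = 1} := by
  have hlsc : LowerSemicontinuous fun Q : ProbabilityMeasure E => ∫⁻ x, Fᶜ.indicator 1 x ∂Q :=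
    lowerSemicontinuous_lintegral (hF.isOpen_compl.lowerSemicontinuous_indicator zero_le_one)
  convert hlsc.isClosed_preimage 0 using 1
  ext Q
  simp only [mem_ofPred_eq, mem_preimage, mem_Iic, nonpos_iff_eq_zero,
    lintegral_indicator_one hF.measurableSet.compl, prob_compl_eq_zero_iff hF.measurableSet]

end Integral

section Weak

open scoped BoundedContinuousFunction

variable {E : Type*} [TopologicalSpace E] [MeasurableSpace E] [BorelSpace E]

lemma isClosed_setOf_map_eq {F : Type*} [TopologicalSpace F]
    [MeasurableSpace F] [BorelSpace F] [HasOuterApproxClosed F] {f : E → F} (hf : Continuous f)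
    (ν : Measure F) [IsProbabilityMeasure ν] :
    IsClosed {Q : ProbabilityMeasure E | (Q : Measure E).map f = ν} := by
  convert (isClosed_singleton (X := ProbabilityMeasure F) (x := ⟨ν, ‹_›⟩)).preimage
    (ProbabilityMeasure.continuous_map hf) using 1
  ext Q
  exact (Subtype.ext_iff (a1 := Q.map hf.measurable.aemeasurable) (a2 := ⟨ν, ‹_›⟩)).symm

lemma le_of_forall_lintegral_le [TopologicalSpace.PseudoMetrizableSpace E] {ν₁ ν₂ : Measure E}
    [IsFiniteMeasure ν₁] [IsFiniteMeasure ν₂]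
    (h : ∀ φ : E →ᵇ ℝ≥0, ∫⁻ x, φ x ∂ν₁ ≤ ∫⁻ x, φ x ∂ν₂) : ν₁ ≤ ν₂ := by
  have hclosed (F : Set E) (hF : IsClosed F) : ν₁ F ≤ ν₂ F :=
    le_of_tendsto_of_tendsto' (HasOuterApproxClosed.tendsto_lintegral_apprSeq hF ν₁)
      (HasOuterApproxClosed.tendsto_lintegral_apprSeq hF ν₂) fun k => h (hF.apprSeq k)
  refine Measure.le_iff.2 fun A hA => ?_
  rw [hA.measure_eq_iSup_isClosed_of_ne_top (measure_ne_top ν₁ A)]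
  exact iSup₂_le fun F hFA => iSup_le fun hF => (hclosed F hF).trans (measure_mono hFA)

lemma isTightMeasureSet_of_map_eval {ι : Type*} [Countable ι] {X : ι → Type*}
    [∀ i, TopologicalSpace (X i)] [∀ i, MeasurableSpace (X i)] {M : Set (Measure (∀ i, X i))}
    (h : ∀ i, IsTightMeasureSet ((fun Q : Measure (∀ i, X i) => Q.map (Function.eval i)) '' M)) :
    IsTightMeasureSet M := by
  simp only [isTightMeasureSet_iff_exists_isCompact_measure_compl_le] at h ⊢
  intro ε hε
  obtain ⟨δ, hδ, hδε⟩ := ENNReal.exists_pos_sum_of_countable' hε.ne' ι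
  choose C hC hCδ using fun i => h i (δ i) (hδ i)
  refine ⟨univ.pi C, isCompact_univ_pi hC, fun Q hQ => ?_⟩
  calc Q (univ.pi C)ᶜ = Q (⋃ i, Function.eval i ⁻¹' (C i)ᶜ) := by
        simp only [Set.pi_def, mem_univ, iInter_true, compl_iInter, preimage_compl]
    _ ≤ ∑' i, Q (Function.eval i ⁻¹' (C i)ᶜ) := measure_iUnion_le _
    _ ≤ ∑' i, δ i := ENNReal.tsum_le_tsum fun i =>
        (Measure.le_map_apply (measurable_pi_apply i).aemeasurable _).trans
          (hCδ i _ (mem_image_of_mem _ hQ))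
    _ ≤ ε := hδε.le

end Weak

section Marginals

lemma isClosed_Omega (n : ℕ) (s₀ : ℝ) : IsClosed (Omega n s₀) :=
  (isClosed_singleton.preimage (continuous_apply 0)).inter (isClosed_Ici (a := (0 : Path n)))

lemma continuous_restr {n : ℕ} (j : Fin n) : Continuous (restr j : Path n → Fin j → ℝ) :=
  continuous_pi fun _ => continuous_apply _

lemma continuous_tailCoords {n : ℕ} : Continuous (tailCoords : Path n → Fin n → ℝ) :=
  continuous_pi fun _ => continuous_apply _

/-- The prescribed law of the coordinate `S_i`: `δ_{s₀}` for `i = 0`, then `μ₁, …, μ_n`. -/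
def marginal {n : ℕ} (s₀ : ℝ) (μ : Fin n → Measure ℝ) : Fin (n + 1) → Measure ℝ :=
  Fin.cons (Measure.dirac s₀) μ

variable {n : ℕ} {s₀ : ℝ} {μ : Fin n → Measure ℝ}

lemma isFiniteMeasure_marginal (hμ : ∀ i, IsFiniteMeasure (μ i)) (i : Fin (n + 1)) :
    IsFiniteMeasure (marginal s₀ μ i) := by
  refine Fin.cases ?_ hμ i
  exact inferInstanceAs (IsFiniteMeasure (Measure.dirac s₀))

lemma integrable_marginal (hmom : ∀ i, Integrable (fun x => x) (μ i)) (i : Fin (n + 1)) :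
    Integrable (fun x => x) (marginal s₀ μ i) := by
  refine Fin.cases ?_ hmom i
  exact integrable_dirac (by simp)

variable {Q : Measure (Path n)}

lemma ae_mem_Omega (hQ : Q ∈ PiMu s₀ μ) : ∀ᵐ ω ∂Q, ω ∈ Omega n s₀ :=
  have := hQ.1
  (mem_ae_iff_prob_eq_one (isClosed_Omega n s₀).measurableSet).2 hQ.2.1

lemma map_eval_eq_marginal (hQ : Q ∈ PiMu s₀ μ) (i : Fin (n + 1)) :
    Q.map (Function.eval i) = marginal s₀ μ i := by
  have := hQ.1
  refine Fin.cases ?_ hQ.2.2 i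
  have h0 : Function.eval 0 =ᵐ[Q] fun _ => s₀ := (ae_mem_Omega hQ).mono fun ω hω => hω.1
  rw [Measure.map_congr h0, Measure.map_const, measure_univ, one_smul]
  rfl

lemma lintegral_comp_eval (hQ : Q ∈ PiMu s₀ μ) (i : Fin (n + 1)) {h : ℝ → ℝ≥0∞}
    (hh : Measurable h) : ∫⁻ ω, h (ω i) ∂Q = ∫⁻ x, h x ∂marginal s₀ μ i := by
  rw [← map_eval_eq_marginal hQ, lintegral_map hh (measurable_pi_apply i)]

lemma integrable_eval (hmom : ∀ i, Integrable (fun x => x) (μ i)) (hQ : Q ∈ PiMu s₀ μ)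
    (i : Fin (n + 1)) : Integrable (fun ω => ω i) Q := by
  have h := integrable_marginal (s₀ := s₀) hmom i
  rw [← map_eval_eq_marginal hQ] at h
  exact h.comp_measurable (measurable_pi_apply i)

lemma isTightMeasureSet_PiMu (hμ : ∀ i, IsFiniteMeasure (μ i)) :
    IsTightMeasureSet (PiMu s₀ μ) := by
  refine isTightMeasureSet_of_map_eval fun i => ?_
  have := isFiniteMeasure_marginal (s₀ := s₀) hμ i
  refine (isTightMeasureSet_singleton (μ := marginal s₀ μ i)).subset ?_
  rintro _ ⟨Q, hQ, rfl⟩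
  exact map_eval_eq_marginal hQ i

lemma isClosed_PiMu (hμ : ∀ i, IsProbabilityMeasure (μ i)) :
    IsClosed {Q : ProbabilityMeasure (Path n) | (Q : Measure (Path n)) ∈ PiMu s₀ μ} := by
  convert (isClosed_setOf_measure_eq_one (isClosed_Omega n s₀)).inter (isClosed_iInter fun i =>
    isClosed_setOf_map_eq (continuous_apply (Fin.succ i)) (μ i)) using 1
  ext Q
  simp only [PiMu, mem_ofPred_eq, mem_inter_iff, mem_iInter]
  exact and_iff_right Q.2

lemma isCompact_PiMu (hμ : ∀ i, IsProbabilityMeasure (μ i)) :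
    IsCompact {Q : ProbabilityMeasure (Path n) | (Q : Measure (Path n)) ∈ PiMu s₀ μ} := by
  rw [← (isClosed_PiMu hμ).closure_eq]
  refine isCompact_closure_of_isTightMeasureSet
    ((isTightMeasureSet_PiMu (s₀ := s₀) (μ := μ) fun i => inferInstance).subset ?_)
  rintro _ ⟨Q, hQ, rfl⟩
  exact hQ

end Marginals

section Supermartingale

open scoped BoundedContinuousFunction

variable {n : ℕ} {Q : Measure (Path n)} {j : Fin n} {i : Fin (n + 1)}

/-- The image under `restr j` of the measure with density `S_i`. The supermartingale property
compares these measures for `i = j + 1` and `i = j`. -/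
def weightedLaw (Q : Measure (Path n)) (j : Fin n) (i : Fin (n + 1)) : Measure (Fin j → ℝ) :=
  (Q.withDensity fun ω => ENNReal.ofReal (ω i)).map (restr j)

lemma lintegral_weightedLaw {φ : (Fin j → ℝ) → ℝ≥0∞} (hφ : Measurable φ) :
    ∫⁻ x, φ x ∂weightedLaw Q j i = ∫⁻ ω, ENNReal.ofReal (ω i) * φ (restr j ω) ∂Q := by
  have hrestr := (continuous_restr j).measurable
  rw [weightedLaw, lintegral_map hφ hrestr]
  exact lintegral_withDensity_eq_lintegral_mul _ (by fun_prop) (hφ.comp hrestr)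

lemma isFiniteMeasure_weightedLaw (hint : Integrable (fun ω => ω i) Q) :
    IsFiniteMeasure (weightedLaw Q j i) := by
  have := isFiniteMeasure_withDensity_ofReal hint.2
  exact Measure.isFiniteMeasure_map _ _

lemma weightedLaw_real_apply (hpos : ∀ᵐ ω ∂Q, 0 ≤ ω i) {A : Set (Fin j → ℝ)}
    (hA : MeasurableSet A) :
    (weightedLaw Q j i).real A = ∫ ω in restr j ⁻¹' A, ω i ∂Q := by
  have hrestr := (continuous_restr j).measurable
  rw [measureReal_def, weightedLaw, Measure.map_apply hrestr hA, withDensity_apply _ (hrestr hA),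
    integral_eq_lintegral_of_nonneg_ae (ae_restrict_of_ae hpos)
      (measurable_pi_apply i).aestronglyMeasurable]

theorem isSupermartingaleLaw_iff_weightedLaw_le (hint : ∀ i, Integrable (fun ω => ω i) Q)
    (hpos : ∀ i, ∀ᵐ ω ∂Q, 0 ≤ ω i) :
    IsSupermartingaleLaw Q ↔ ∀ j : Fin n, weightedLaw Q j j.succ ≤ weightedLaw Q j j.castSucc := by
  refine forall_congr' fun j => ?_
  have hfin (i : Fin (n + 1)) := isFiniteMeasure_weightedLaw (j := j) (hint i)
  rw [Measure.le_iff]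
  refine forall₂_congr fun A hA => ?_
  have hincr : ∫ ω, A.indicator (fun _ => (1 : ℝ)) (restr j ω) * (ω j.succ - ω j.castSucc) ∂Q =
      (weightedLaw Q j j.succ).real A - (weightedLaw Q j j.castSucc).real A := by
    rw [weightedLaw_real_apply (hpos _) hA, weightedLaw_real_apply (hpos _) hA,
      ← integral_sub (hint _).integrableOn (hint _).integrableOn,
      ← integral_indicator ((continuous_restr j).measurable hA)]
    exact integral_congr_ae (.of_forall fun ω => by by_cases h : restr j ω ∈ A <;> simp [h])
  rw [hincr, sub_nonpos]
  exact ENNReal.toReal_le_toReal (measure_ne_top _ _) (measure_ne_top _ _)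

theorem isSupermartingaleLaw_iff_lintegral_le (hint : ∀ i, Integrable (fun ω => ω i) Q)
    (hpos : ∀ i, ∀ᵐ ω ∂Q, 0 ≤ ω i) :
    IsSupermartingaleLaw Q ↔ ∀ (j : Fin n) (φ : (Fin j → ℝ) →ᵇ ℝ≥0),
      ∫⁻ ω, ENNReal.ofReal (ω j.succ) * φ (restr j ω) ∂Q ≤
        ∫⁻ ω, ENNReal.ofReal (ω j.castSucc) * φ (restr j ω) ∂Q := by
  rw [isSupermartingaleLaw_iff_weightedLaw_le hint hpos]
  refine forall_congr' fun j => ?_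
  have hfin (i : Fin (n + 1)) := isFiniteMeasure_weightedLaw (j := j) (hint i)
  have hweight (i : Fin (n + 1)) (φ : (Fin j → ℝ) →ᵇ ℝ≥0) :
      ∫⁻ x, φ x ∂weightedLaw Q j i = ∫⁻ ω, ENNReal.ofReal (ω i) * φ (restr j ω) ∂Q :=
    lintegral_weightedLaw φ.continuous.measurable.coe_nnreal_ennreal
  simp only [← hweight]
  exact ⟨fun h φ => lintegral_mono' h le_rfl, le_of_forall_lintegral_le⟩

variable {s₀ : ℝ} {μ : Fin n → Measure ℝ}

lemma continuousOn_lintegral_eval_mul_restr (hmom : ∀ i, Integrable (fun x => x) (μ i))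
    (φ : (Fin j → ℝ) →ᵇ ℝ≥0) :
    ContinuousOn
      (fun Q : ProbabilityMeasure (Path n) => ∫⁻ ω, ENNReal.ofReal (ω i) * φ (restr j ω) ∂Q)
      {Q | (Q : Measure (Path n)) ∈ PiMu s₀ μ} := by
  have hS : Continuous fun ω : Path n => ENNReal.ofReal (ω i) :=
    ENNReal.continuous_ofReal.comp (continuous_apply i)
  have hφ : Continuous fun ω : Path n => (φ (restr j ω) : ℝ≥0∞) :=
    ENNReal.continuous_coe.comp (φ.continuous.comp (continuous_restr j))
  refine continuousOn_lintegral_of_le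
    (g := fun ω => ENNReal.ofReal (ω i) * (nndist φ 0 : ℝ≥0))
    (c := (∫⁻ x, ENNReal.ofReal x ∂marginal s₀ μ i) * (nndist φ 0 : ℝ≥0)) ?_ ?_ ?_ ?_ ?_
  · exact hS.ennreal_mul hφ (fun _ => .inr ENNReal.coe_ne_top) fun _ => .inr ENNReal.ofReal_ne_top
  · exact ENNReal.continuous_mul_const ENNReal.coe_ne_top |>.comp hS
  · exact fun ω => mul_le_mul_right
      (ENNReal.coe_le_coe.2 (BoundedContinuousFunction.NNReal.upper_bound φ (restr j ω))) _
  · exact ENNReal.mul_ne_top (integrable_marginal hmom i).lintegral_lt_top.ne ENNReal.coe_ne_top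
  · intro Q hQ
    rw [lintegral_mul_const _ hS.measurable, lintegral_comp_eval hQ i ENNReal.measurable_ofReal]

theorem isCompact_MSet (hμ : ∀ i, IsProbabilityMeasure (μ i))
    (hmom : ∀ i, Integrable (fun x => x) (μ i)) :
    IsCompact {Q : ProbabilityMeasure (Path n) | (Q : Measure (Path n)) ∈ MSet s₀ μ} := by
  set calibrated := {Q : ProbabilityMeasure (Path n) | (Q : Measure (Path n)) ∈ PiMu s₀ μ}
  have hclosed : IsClosed (⋂ (j : Fin n) (φ : (Fin j → ℝ) →ᵇ ℝ≥0), {Q ∈ calibrated |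
      ∫⁻ ω, ENNReal.ofReal (ω j.succ) * φ (restr j ω) ∂Q ≤
        ∫⁻ ω, ENNReal.ofReal (ω j.castSucc) * φ (restr j ω) ∂Q}) :=
    isClosed_iInter fun j => isClosed_iInter fun φ =>
      (isClosed_PiMu hμ).isClosed_le (continuousOn_lintegral_eval_mul_restr hmom φ)
        (continuousOn_lintegral_eval_mul_restr hmom φ)
  convert (isCompact_PiMu (s₀ := s₀) hμ).inter_right hclosed using 1
  ext Q
  refine and_congr_right fun hQ => ?_
  have hpos (i : Fin (n + 1)) : ∀ᵐ ω ∂(Q : Measure (Path n)), 0 ≤ ω i :=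
    (ae_mem_Omega hQ).mono fun ω hω => hω.2 i
  rw [isSupermartingaleLaw_iff_lintegral_le (integrable_eval hmom hQ) hpos]
  have hQ' : Q ∈ calibrated := hQ
  simp only [mem_iInter, mem_ofPred_eq, hQ', true_and]

end Supermartingale

section Expectation

lemma posE_eq_toENNReal (x : EReal) : posE x = x.toENNReal := rfl

lemma upperSemicontinuous_piecewise_bot {E α : Type*} [TopologicalSpace E] [Preorder α]
    [OrderBot α] {S : Set E} (hS : IsClosed S) {f : E → α} (hf : UpperSemicontinuousOn f S) :
    UpperSemicontinuous (S.piecewise f fun _ => ⊥) := by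
  intro x y hy
  by_cases hx : x ∈ S
  · rw [piecewise_eq_of_mem _ _ _ hx] at hy
    filter_upwards [eventually_nhdsWithin_iff.1 (hf x hx y hy)] with z hz
    by_cases hzS : z ∈ S
    · simpa only [piecewise_eq_of_mem _ _ _ hzS] using hz hzS
    · simpa only [piecewise_eq_of_notMem _ _ _ hzS] using bot_le.trans_lt hy
  · filter_upwards [hS.isOpen_compl.mem_nhds hx] with z hz
    rw [piecewise_eq_of_notMem _ _ _ hx] at hy
    rwa [piecewise_eq_of_notMem _ _ _ hz]

lemma exists_natCast_sub_mul_lt {c q : ℝ≥0∞} (hc : c ≠ ⊤) (hq : q ≠ 0) (y : ℝ) :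
    ∃ k : ℕ, (c : EReal) - ((k * q : ℝ≥0∞) : EReal) < y := by
  obtain ⟨k, hk⟩ := ENNReal.exists_nat_mul_gt hq
    (ENNReal.add_ne_top.2 ⟨hc, ENNReal.ofReal_ne_top (r := -y)⟩)
  have hy : -(y : EReal) ≤ (ENNReal.ofReal (-y) : EReal) := by
    rw [EReal.coe_ennreal_ofReal, ← EReal.coe_neg]
    exact EReal.coe_le_coe_iff.2 (le_max_left _ _)
  have hlt : (c : EReal) - y < ((k * q : ℝ≥0∞) : EReal) :=
    calc (c : EReal) - y ≤ ((c + ENNReal.ofReal (-y) : ℝ≥0∞) : EReal) := by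
          rw [EReal.coe_ennreal_add]
          exact add_le_add_right hy _
      _ < ((k * q : ℝ≥0∞) : EReal) := EReal.coe_ennreal_lt_coe_ennreal_iff.2 hk
  refine ⟨k, EReal.sub_lt_of_lt_add' ?_⟩
  rwa [EReal.sub_lt_iff (.inl (EReal.coe_ne_bot y)) (.inl (EReal.coe_ne_top y))] at hlt

variable {n : ℕ} {f : Path n → EReal}

lemma eexpE_mono_ae {Q : Measure (Path n)} {f' : Path n → EReal} (h : f ≤ᵐ[Q] f') :
    eexpE Q f ≤ eexpE Q f' := by
  refine EReal.sub_le_sub (EReal.coe_ennreal_le_coe_ennreal_iff.2 (lintegral_mono_ae ?_))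
    (EReal.coe_ennreal_le_coe_ennreal_iff.2 (lintegral_mono_ae ?_))
  · exact h.mono fun ω hω => EReal.toENNReal_le_toENNReal hω
  · exact h.mono fun ω hω => EReal.toENNReal_le_toENNReal (EReal.neg_le_neg_iff.2 hω)

lemma eexpE_congr_ae {Q : Measure (Path n)} {f' : Path n → EReal} (h : f =ᵐ[Q] f') :
    eexpE Q f = eexpE Q f' :=
  (eexpE_mono_ae h.le).antisymm (eexpE_mono_ae h.symm.le)

theorem upperSemicontinuousOn_eexpE {S : Set (Path n)} (hS : IsClosed S)
    (hf : UpperSemicontinuousOn f S) {g : Path n → ℝ≥0∞} (hg : Continuous g)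
    (hfg : ∀ ω ∈ S, posE (f ω) ≤ g ω) {M : Set (ProbabilityMeasure (Path n))}
    (hMS : ∀ Q ∈ M, ∀ᵐ ω ∂(Q : Measure (Path n)), ω ∈ S) {c : ℝ≥0∞} (hc : c ≠ ⊤)
    (hM : ∀ Q ∈ M, ∫⁻ ω, g ω ∂Q = c) :
    UpperSemicontinuousOn (fun Q : ProbabilityMeasure (Path n) => eexpE Q f) M := by
  set f' : Path n → EReal := S.piecewise f fun _ => ⊥
  have hf' : UpperSemicontinuous f' := upperSemicontinuous_piecewise_bot hS hf
  have hle : (fun ω => posE (f' ω)) ≤ g := fun ω => by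
    by_cases hω : ω ∈ S
    · simpa only [f', piecewise_eq_of_mem _ _ _ hω] using hfg ω hω
    · simp [f', hω, posE_eq_toENNReal]
  have hpos : UpperSemicontinuousOn
      (fun Q : ProbabilityMeasure (Path n) => ((∫⁻ ω, posE (f' ω) ∂Q : ℝ≥0∞) : EReal)) M :=
    continuous_coe_ennreal_ereal.comp_upperSemicontinuousOn
      (upperSemicontinuousOn_lintegral_of_le (EReal.continuous_toENNReal.comp_upperSemicontinuous
        hf' fun _ _ => EReal.toENNReal_le_toENNReal) hg hle hc hM)
      EReal.coe_ennreal_strictMono.monotone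
  have hneg : UpperSemicontinuousOn
      (fun Q : ProbabilityMeasure (Path n) => -((∫⁻ ω, posE (-f' ω) ∂Q : ℝ≥0∞) : EReal)) M := by
    have hlsc : LowerSemicontinuous fun ω => posE (-f' ω) :=
      (EReal.continuous_toENNReal.comp continuous_neg).comp_upperSemicontinuous_antitone hf'
        fun _ _ h => EReal.toENNReal_le_toENNReal (EReal.neg_le_neg_iff.2 h)
    exact ((continuous_neg.comp continuous_coe_ennreal_ereal).comp_lowerSemicontinuous_antitone
      (lowerSemicontinuous_lintegral hlsc) fun _ _ h =>
        EReal.neg_le_neg_iff.2 (EReal.coe_ennreal_le_coe_ennreal_iff.2 h)).upperSemicontinuousOn M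
  refine upperSemicontinuousOn_congr (fun Q hQ => ?_) (hpos.add' hneg fun Q hQ => ?_)
  · exact eexpE_congr_ae ((hMS Q hQ).mono fun ω hω => piecewise_eq_of_mem _ _ _ hω)
  · have hfin : ((∫⁻ ω, posE (f' ω) ∂Q : ℝ≥0∞) : EReal) ≠ ⊤ :=
      EReal.coe_ennreal_eq_top_iff.not.2
        (ne_top_of_le_ne_top hc ((lintegral_mono hle).trans_eq (hM Q hQ)))
    exact EReal.continuousAt_add (.inl hfin) (.inl (EReal.coe_ennreal_ne_bot _))

end Expectation

section Penalisation

variable {n : ℕ} {s₀ : ℝ} {μ : Fin n → Measure ℝ} {P : Set (Path n)} {F : Path n → EReal} {K : ℝ}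

/-- The function `1 + S₁ + … + S_n` that dominates the payoffs, with negative coordinates truncated
to `0`; on `Omega n s₀` the truncation has no effect. -/
def weight (ω : Path n) : ℝ≥0∞ := 1 + ∑ i : Fin n, ENNReal.ofReal (ω i.succ)

lemma continuous_weight : Continuous (weight : Path n → ℝ≥0∞) :=
  continuous_const.add (continuous_finsetSum _ fun i _ =>
    ENNReal.continuous_ofReal.comp (continuous_apply i.succ))

lemma weight_of_mem_Omega {ω : Path n} (hω : ω ∈ Omega n s₀) :
    weight ω = ENNReal.ofReal (1 + ∑ i : Fin n, ω i.succ) := by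
  rw [ENNReal.ofReal_add zero_le_one (Finset.sum_nonneg fun i _ => hω.2 _), ENNReal.ofReal_one,
    ENNReal.ofReal_sum_of_nonneg fun i _ => hω.2 _, weight]

lemma lintegral_weight {Q : Measure (Path n)} (hQ : Q ∈ PiMu s₀ μ) :
    ∫⁻ ω, weight ω ∂Q = 1 + ∑ i, ∫⁻ x, ENNReal.ofReal x ∂μ i := by
  have := hQ.1
  simp only [weight]
  rw [lintegral_add_left measurable_const, lintegral_const, measure_univ, one_mul,
    lintegral_finsetSum _ fun i _ => by fun_prop]
  exact congrArg (1 + ·) (Finset.sum_congr rfl fun i _ =>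
    lintegral_comp_eval hQ i.succ ENNReal.measurable_ofReal)

lemma lintegral_ofReal_mul_weight {Q : Measure (Path n)} (hQ : Q ∈ PiMu s₀ μ) :
    ∫⁻ ω, ENNReal.ofReal K * weight ω ∂Q =
      ENNReal.ofReal K * (1 + ∑ i, ∫⁻ x, ENNReal.ofReal x ∂μ i) := by
  rw [lintegral_const_mul _ continuous_weight.measurable, lintegral_weight hQ]

lemma ofReal_mul_one_add_sum_lintegral_ne_top (hmom : ∀ i, Integrable (fun x => x) (μ i)) :
    ENNReal.ofReal K * (1 + ∑ i, ∫⁻ x, ENNReal.ofReal x ∂μ i) ≠ ⊤ :=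
  ENNReal.mul_ne_top ENNReal.ofReal_ne_top <| ENNReal.add_ne_top.2
    ⟨ENNReal.one_ne_top, ENNReal.sum_ne_top.2 fun i _ => (hmom i).lintegral_lt_top.ne⟩

lemma one_le_one_add_sum_of_mem_Omega {ω : Path n} (hω : ω ∈ Omega n s₀) :
    1 ≤ 1 + ∑ i : Fin n, ω i.succ :=
  le_add_of_nonneg_right (Finset.sum_nonneg fun i _ => hω.2 i.succ)

lemma lambdaP_nonneg {ω : Path n} (hω : ω ∈ Omega n s₀) : 0 ≤ lambdaP P ω := by
  rw [lambdaP]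
  split_ifs
  · exact le_rfl
  · exact zero_le_one.trans (one_le_one_add_sum_of_mem_Omega hω)

lemma lowerSemicontinuousOn_lambdaP (hP : IsClosed P) :
    LowerSemicontinuousOn (lambdaP P) (Omega n s₀) := by
  intro ω _ y hy
  by_cases hωP : ω ∈ P
  · rw [lambdaP, if_pos hωP] at hy
    filter_upwards [self_mem_nhdsWithin] with η hη
    exact hy.trans_le (lambdaP_nonneg hη)
  · rw [lambdaP, if_neg hωP] at hy
    have hcont : Continuous fun η : Path n => 1 + ∑ i : Fin n, η i.succ := by fun_prop
    filter_upwards [nhdsWithin_le_nhds (hP.isOpen_compl.mem_nhds hωP),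
      nhdsWithin_le_nhds (hcont.continuousAt.eventually_const_lt hy)] with η hηP hη
    rwa [lambdaP, if_neg hηP]

/-- The penalised payoff `G^{(N)} = G − N λ_𝔓`. -/
def penalised (P : Set (Path n)) (F : Path n → EReal) (N : ℕ) (ω : Path n) : EReal :=
  F ω - ((N * lambdaP P ω : ℝ) : EReal)

lemma penalised_of_mem {ω : Path n} (hω : ω ∈ P) (N : ℕ) : penalised P F N ω = F ω := by
  rw [penalised, lambdaP, if_pos hω, mul_zero, EReal.coe_zero, sub_zero]

lemma eexpE_penalised_of_measure_eq_one {Q : Measure (Path n)} [IsProbabilityMeasure Q]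
    (hP : MeasurableSet P) (hQP : Q P = 1) (N : ℕ) : eexpE Q (penalised P F N) = eexpE Q F :=
  have hmem : ∀ᵐ ω ∂Q, ω ∈ P := (mem_ae_iff_prob_eq_one hP).2 hQP
  eexpE_congr_ae (hmem.mono fun _ hω => penalised_of_mem hω N)

lemma antitone_penalised {ω : Path n} (hω : ω ∈ Omega n s₀) :
    Antitone fun N => penalised P F N ω := fun _ _ h =>
  EReal.sub_le_sub le_rfl <| EReal.coe_le_coe_iff.2 <|
    mul_le_mul_of_nonneg_right (Nat.cast_le.2 h) (lambdaP_nonneg hω)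

lemma upperSemicontinuousOn_penalised (hP : IsClosed P)
    (hF : UpperSemicontinuousOn F (Omega n s₀)) (N : ℕ) :
    UpperSemicontinuousOn (penalised P F N) (Omega n s₀) := by
  have hpen : UpperSemicontinuousOn (fun ω => -((N * lambdaP P ω : ℝ) : EReal)) (Omega n s₀) :=
    (continuous_neg.comp (continuous_coe_real_ereal.comp
      (continuous_const_mul (N : ℝ)))).comp_lowerSemicontinuousOn_antitone
      (lowerSemicontinuousOn_lambdaP hP) fun _ _ h => EReal.neg_le_neg_iff.2 <|
        EReal.coe_le_coe_iff.2 <| mul_le_mul_of_nonneg_left h N.cast_nonneg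
  refine hF.add' hpen fun ω _ => EReal.continuousAt_add (.inr ?_) (.inr ?_)
  · rw [← EReal.coe_neg]
    exact EReal.coe_ne_bot _
  · rw [← EReal.coe_neg]
    exact EReal.coe_ne_top _

variable (hFK : ∀ ω ∈ Omega n s₀, F ω ≤ ((K * (1 + ∑ i : Fin n, ω i.succ) : ℝ) : EReal))

include hFK

lemma posE_penalised_le {ω : Path n} (hω : ω ∈ Omega n s₀) (N : ℕ) :
    posE (penalised P F N ω) ≤ ENNReal.ofReal K * weight ω := by
  have h0 : penalised P F N ω ≤ F ω := by
    simpa [penalised] using antitone_penalised (P := P) (F := F) hω N.zero_le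
  rw [weight_of_mem_Omega hω,
    ← ENNReal.ofReal_mul' (zero_le_one.trans (one_le_one_add_sum_of_mem_Omega hω)),
    ← EReal.real_coe_toENNReal]
  exact EReal.toENNReal_le_toENNReal (h0.trans (hFK ω hω))

lemma le_posE_neg_penalised {ω : Path n} (hω : ω ∈ Omega n s₀) (hωP : ω ∉ P) {m : ℕ}
    (hm : K ≤ m) (k : ℕ) : k ≤ posE (-penalised P F (m + k) ω) := by
  have hsum := one_le_one_add_sum_of_mem_Omega hω
  have hle : penalised P F (m + k) ω ≤ ((-k : ℝ) : EReal) :=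
    calc penalised P F (m + k) ω
        ≤ ((K * (1 + ∑ i : Fin n, ω i.succ) : ℝ) : EReal) -
            (((m + k : ℕ) * (1 + ∑ i : Fin n, ω i.succ) : ℝ) : EReal) := by
          rw [penalised, lambdaP, if_neg hωP]
          exact EReal.sub_le_sub (hFK ω hω) le_rfl
      _ ≤ ((-k : ℝ) : EReal) := by
          rw [← EReal.coe_sub, EReal.coe_le_coe_iff]
          push_cast
          nlinarith [k.cast_nonneg (α := ℝ)]
  calc (k : ℝ≥0∞) = ((k : ℝ) : EReal).toENNReal := by
        rw [EReal.real_coe_toENNReal, ENNReal.ofReal_natCast]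
    _ ≤ posE (-penalised P F (m + k) ω) :=
        EReal.toENNReal_le_toENNReal (EReal.le_neg_of_le_neg (by exact_mod_cast hle))

theorem upperSemicontinuousOn_eexpE_penalised (hmom : ∀ i, Integrable (fun x => x) (μ i))
    (hP : IsClosed P) (hF : UpperSemicontinuousOn F (Omega n s₀)) (N : ℕ) :
    UpperSemicontinuousOn
      (fun Q : ProbabilityMeasure (Path n) => eexpE Q (penalised P F N))
      {Q | (Q : Measure (Path n)) ∈ PiMu s₀ μ} :=
  upperSemicontinuousOn_eexpE (isClosed_Omega n s₀) (upperSemicontinuousOn_penalised hP hF N)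
    (ENNReal.continuous_const_mul ENNReal.ofReal_ne_top |>.comp continuous_weight)
    (fun _ hω => posE_penalised_le hFK hω N) (fun _ => ae_mem_Omega)
    (ofReal_mul_one_add_sum_lintegral_ne_top hmom) fun _ => lintegral_ofReal_mul_weight

lemma eexpE_penalised_le {Q : Measure (Path n)} (hQ : Q ∈ PiMu s₀ μ) (hP : MeasurableSet P)
    {m : ℕ} (hm : K ≤ m) (k : ℕ) :
    eexpE Q (penalised P F (m + k)) ≤
      ((ENNReal.ofReal K * (1 + ∑ i, ∫⁻ x, ENNReal.ofReal x ∂μ i) : ℝ≥0∞) : EReal) -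
        ((k * Q Pᶜ : ℝ≥0∞) : EReal) := by
  refine EReal.sub_le_sub (EReal.coe_ennreal_le_coe_ennreal_iff.2 ?_)
    (EReal.coe_ennreal_le_coe_ennreal_iff.2 ?_)
  · rw [← lintegral_ofReal_mul_weight hQ]
    exact lintegral_mono_ae ((ae_mem_Omega hQ).mono fun ω hω => posE_penalised_le hFK hω _)
  · rw [← lintegral_indicator_const hP.compl]
    refine lintegral_mono_ae ((ae_mem_Omega hQ).mono fun ω hω => ?_)
    exact indicator_apply_le' (le_posE_neg_penalised hFK hω · hm k) fun _ => zero_le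

lemma iInf_eexpE_penalised_eq_bot (hmom : ∀ i, Integrable (fun x => x) (μ i)) {Q : Measure (Path n)}
    (hQ : Q ∈ PiMu s₀ μ) (hP : MeasurableSet P) (hQP : Q P ≠ 1) :
    ⨅ N : {N : ℕ // 1 ≤ N}, eexpE Q (penalised P F N) = ⊥ := by
  have := hQ.1
  obtain ⟨m, hm⟩ := exists_nat_ge (max K 1)
  have hm1 : 1 ≤ m := by exact_mod_cast (le_max_right K 1).trans hm
  refine (EReal.eq_bot_iff_forall_lt _).2 fun y => ?_
  obtain ⟨k, hk⟩ := exists_natCast_sub_mul_lt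
    (ofReal_mul_one_add_sum_lintegral_ne_top (K := K) hmom)
    ((prob_compl_eq_zero_iff hP).not.2 hQP) y
  calc ⨅ N : {N : ℕ // 1 ≤ N}, eexpE Q (penalised P F N)
      ≤ eexpE Q (penalised P F (m + k)) := iInf_le_of_le ⟨m + k, le_add_right hm1⟩ le_rfl
    _ ≤ _ := eexpE_penalised_le hFK hQ hP ((le_max_left K 1).trans hm) k
    _ < y := hk

theorem iSup_iInf_eexpE_penalised_eq_iSup_MSetP (hmom : ∀ i, Integrable (fun x => x) (μ i))
    (hP : MeasurableSet P) :
    ⨆ Q ∈ MSet s₀ μ, ⨅ N : {N : ℕ // 1 ≤ N}, eexpE Q (penalised P F N) =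
      ⨆ Q ∈ MSetP s₀ μ P, eexpE Q F := by
  simp only [MSetP, mem_ofPred_eq, iSup_and]
  refine biSup_congr fun Q hQ => ?_
  have := hQ.1.1
  have : Nonempty {N : ℕ // 1 ≤ N} := ⟨⟨1, le_rfl⟩⟩
  by_cases hQP : Q P = 1
  · simp only [hQP, eexpE_penalised_of_measure_eq_one hP hQP, iInf_const, iSup_true]
  · simp only [hQP, iInf_eexpE_penalised_eq_bot hFK hmom hQ.1 hP hQP, iSup_false]

theorem iInf_iSup_eexpE_penalised_eq_iSup_iInf (hμ : ∀ i, IsProbabilityMeasure (μ i))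
    (hmom : ∀ i, Integrable (fun x => x) (μ i)) (hP : IsClosed P)
    (hF : UpperSemicontinuousOn F (Omega n s₀)) :
    ⨅ N : {N : ℕ // 1 ≤ N}, ⨆ Q ∈ MSet s₀ μ, eexpE Q (penalised P F N) =
      ⨆ Q ∈ MSet s₀ μ, ⨅ N : {N : ℕ // 1 ≤ N}, eexpE Q (penalised P F N) := by
  have : Nonempty {N : ℕ // 1 ≤ N} := ⟨⟨1, le_rfl⟩⟩
  have hcoe (φ : Measure (Path n) → EReal) : ⨆ Q ∈ MSet s₀ μ, φ Q =
      ⨆ Q ∈ {Q : ProbabilityMeasure (Path n) | (Q : Measure (Path n)) ∈ MSet s₀ μ}, φ Q :=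
    le_antisymm (iSup₂_le fun Q hQ => le_iSup₂_of_le ⟨Q, hQ.1.1⟩ hQ le_rfl)
      (iSup₂_le fun Q hQ => le_iSup₂_of_le (Q : Measure (Path n)) hQ le_rfl)
  simp only [hcoe]
  exact iInf_iSup_eq_iSup_iInf_of_antitone (isCompact_MSet hμ hmom)
    (fun N => (upperSemicontinuousOn_eexpE_penalised hFK hmom hP hF N).mono fun Q hQ => hQ.1)
    fun Q hQ N N' h => eexpE_mono_ae ((ae_mem_Omega hQ.1).mono fun ω hω => antitone_penalised hω h)

end Penalisation

theorem minmax_penalised_general {n : ℕ} {s₀ : ℝ} (μ : Fin n → Measure ℝ)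
    (hprob : ∀ i, IsProbabilityMeasure (μ i)) (hmom : ∀ i, Integrable (fun x => x) (μ i))
    (P : Set (Path n)) (hPclosed : IsClosed P) (F : Path n → EReal)
    (hFusc : UpperSemicontinuousOn F (Omega n s₀)) (K : ℝ)
    (hF : ∀ ω ∈ Omega n s₀, F ω ≤ ((K * (1 + ∑ i : Fin n, ω i.succ) : ℝ) : EReal)) :
    (⨅ (N : ℕ) (_ : 1 ≤ N), ⨆ Q ∈ MSet s₀ μ, eexpE Q (penalised P F N)) =
      (⨆ Q ∈ MSet s₀ μ, ⨅ (N : ℕ) (_ : 1 ≤ N), eexpE Q (penalised P F N)) ∧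
    (⨆ Q ∈ MSet s₀ μ, ⨅ (N : ℕ) (_ : 1 ≤ N), eexpE Q (penalised P F N)) =
      ⨆ Q ∈ MSetP s₀ μ P, eexpE Q F := by
  simp only [iInf_subtype']
  exact ⟨iInf_iSup_eexpE_penalised_eq_iSup_iInf hF hprob hmom hPclosed hFusc,
    iSup_iInf_eexpE_penalised_eq_iSup_MSetP hF hmom hPclosed.measurableSet⟩

/-- min-max interchange for the penalised primal problem:
under the stated assumptions, with `G^{(N)} = G − N λ_𝔓`,
`inf_N sup_{M⁻_μ} E[G^{(N)}] = sup_{M⁻_μ} inf_N E[G^{(N)}] = sup_{M⁻_{μ,𝔓}} E[G]`. -/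
theorem minmax_penalised
    {n : ℕ} (hn : 1 ≤ n) {s₀ : ℝ} (hs₀ : 0 < s₀)
    (μ : Fin n → Measure ℝ) (hprob : ∀ i, IsProbabilityMeasure (μ i))
    (hsupp : ∀ i, μ i (Set.Iio 0) = 0) (hmom : ∀ i, Integrable (fun x => x) (μ i))
    (P : Set (Path n)) (hPsub : P ⊆ Omega n s₀) (hPclosed : IsClosed P)
    (hne : (MSetP s₀ μ P).Nonempty)
    (G : (Fin n → ℝ) → EReal) (hGtop : ∀ s, G s ≠ ⊤)
    (hGusc : UpperSemicontinuousOn G {s | ∀ i, 0 ≤ s i})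
    (K : ℝ) (hG : ∀ s : Fin n → ℝ, (∀ i, 0 ≤ s i) → G s ≤ ((K * (1 + ∑ i, s i) : ℝ) : EReal))
    (hfin : ⊥ < ⨆ Q ∈ MSetP s₀ μ P, eexpE Q (fun ω => G (tailCoords ω))) :
    (⨅ (N : ℕ) (_ : 1 ≤ N), ⨆ Q ∈ MSet s₀ μ,
        eexpE Q (fun ω => G (tailCoords ω) - (((N : ℝ) * lambdaP P ω : ℝ) : EReal))) =
      (⨆ Q ∈ MSet s₀ μ, ⨅ (N : ℕ) (_ : 1 ≤ N),
        eexpE Q (fun ω => G (tailCoords ω) - (((N : ℝ) * lambdaP P ω : ℝ) : EReal))) ∧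
    (⨆ Q ∈ MSet s₀ μ, ⨅ (N : ℕ) (_ : 1 ≤ N),
        eexpE Q (fun ω => G (tailCoords ω) - (((N : ℝ) * lambdaP P ω : ℝ) : EReal))) =
      ⨆ Q ∈ MSetP s₀ μ P, eexpE Q (fun ω => G (tailCoords ω)) :=
  minmax_penalised_general μ hprob hmom P hPclosed _
    (hGusc.comp continuous_tailCoords.continuousOn fun _ hω i => hω.2 i.succ) K
    fun _ hω => hG _ fun i => hω.2 i.succ

end RobustFin
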